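/- arXiv:2206.07505 — 6 statements merged into one kernel-verified Lean document; each statement's English description precedes it below -/
import Mathlib

section
/- For every n ≥ 2, the set of permutation tuples in ({1,…,n})ⁿ (tuples (a¹,…,aⁿ) whose coordinates are pairwise distinct) is not equal to a Cartesian product S₁ × ⋯ × Sₙ for any subsets S₁,…,Sₙ ⊆ {1,…,n}; hence no local value functions Q₁,…,Qₙ : {1,…,n} → ℝ can satisfy the IGM principle for the n-player permutation game. -/
open scoped Classical

/-- A product set is closed under mixing coordinates of its members. The identity and the
transposition of `0` and `1` are permutation tuples, but taking coordinate `0` from the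
transposition and the others from the identity gives `(1, 1, 2, …)`, which is not. -/
theorem setOf_injective_ne_pi (n : ℕ) (hn : 2 ≤ n) (S : Fin n → Set (Fin n)) :
    {a : Fin n → Fin n | Function.Injective a} ≠ Set.univ.pi S := by
  intro h
  let i : Fin n := ⟨0, by omega⟩
  let j : Fin n := ⟨1, by omega⟩
  have hij : i ≠ j := by simp [i, j]
  have hid : (id : Fin n → Fin n) ∈ Set.univ.pi S := h ▸ Function.injective_id
  have hswap : (Equiv.swap i j : Fin n → Fin n) ∈ Set.univ.pi S :=
    h ▸ (Equiv.swap i j).injective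
  have hmix : Function.update id i j ∈ Set.univ.pi S := by
    intro k _
    by_cases hk : k = i
    · subst hk
      simpa using hswap i trivial
    · simpa [Function.update_of_ne hk] using hid k trivial
  rw [← h] at hmix
  exact hij (hmix (by simp [Function.update_of_ne hij.symm]))

/-- For every `n ≥ 2`, the set of permutation tuples in `(Fin n)ⁿ` (tuples with
pairwise distinct coordinates, i.e. injective `a : Fin n → Fin n`) is not a
Cartesian product `S₁ × ⋯ × Sₙ`; hence no local value functions
`Q₁, …, Qₙ : Fin n → ℝ` can satisfy the IGM principle for the `n`-player
permutation game (whose reward is `1` on permutation tuples and `0` otherwise). -/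
theorem permutation_game_no_igm_representation (n : ℕ) (hn : 2 ≤ n) :
    (∀ S : Fin n → Set (Fin n),
        {a : Fin n → Fin n | Function.Injective a} ≠ Set.univ.pi S) ∧
    ¬ ∃ Q : Fin n → Fin n → ℝ,
        {a : Fin n → Fin n | ∀ b : Fin n → Fin n,
            (if Function.Injective b then (1 : ℝ) else 0) ≤
              (if Function.Injective a then (1 : ℝ) else 0)} =
          Set.univ.pi (fun i => {x : Fin n | ∀ y : Fin n, Q i y ≤ Q i x}) := by
  refine ⟨setOf_injective_ne_pi n hn, ?_⟩
  rintro ⟨Q, hQ⟩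
  apply setOf_injective_ne_pi n hn (fun i => {x : Fin n | ∀ y : Fin n, Q i y ≤ Q i x})
  rw [← hQ]
  -- The reward attains its maximum `1` at the identity, so its maximizers are the permutations.
  ext a
  simp only [Set.mem_ofPred_eq]
  constructor
  · intro ha b
    rw [if_pos ha]
    split_ifs <;> norm_num
  · intro ha
    by_contra hna
    have hle := ha id
    rw [if_pos Function.injective_id, if_neg hna] at hle
    norm_num at hle
end

section
/- The expected reward of an independent (product) policy in the XOR game, given by J(α,β) = α(1−β) + β(1−α) for α, β ∈ [0,1] (the probabilities that agent 1 resp. agent 2 plays action 0), has no suboptimal local maxima on [0,1]²: for every (α,β) ∈ [0,1]² with J(α,β) < 1 and every ε > 0, there exists (α',β') ∈ [0,1]² with ‖(α',β') − (α,β)‖ < ε and J(α',β') > J(α,β). -/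
/-!
The global maximizers of `J` on the square are the corners `(0,1)` and `(1,0)`. From any
non-maximal `(α,β)`, every step along the segment towards the nearer one strictly increases `J`.
For `α ≤ β`, put `p = α` and `q = 1 - β`, so that `p + q ≤ 1`. The step of relative length `t`
towards `(0,1)` replaces `p, q` by `(1-t)p, (1-t)q`, and it increases `J` by
`2t ((p + q)/2 - 2pq + t p q)`. Here `(p + q)/2 - 2pq ≥ (p - q)²/2 ≥ 0`, and the bracket vanishes
only at `p = q = 0`. The case `β ≤ α` follows by exchanging the agents.
-/

/-- Moving from `(α,β)` a fraction `t` of the way towards the nearer maximizing corner `(0,1)`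
strictly increases the reward. -/
lemma xor_reward_lt_toward_corner {α β t : ℝ} (hα : 0 ≤ α) (hβ : β ≤ 1) (hαβ : α ≤ β)
    (h : α * (1 - β) + β * (1 - α) < 1) (ht : 0 < t) :
    α * (1 - β) + β * (1 - α) <
      (α - t * α) * (1 - (β + t * (1 - β))) + (β + t * (1 - β)) * (1 - (α - t * α)) := by
  obtain ⟨q, rfl⟩ : ∃ q, β = 1 - q := ⟨1 - β, by ring⟩
  have hq : 0 ≤ q := by linarith
  have hpq : 0 ≤ α * q := mul_nonneg hα hq
  have hlin : 0 ≤ (α + q) / 2 - 2 * (α * q) := by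
    nlinarith [sq_nonneg (α - q), mul_nonneg (add_nonneg hα hq) (by linarith : 0 ≤ 1 - (α + q))]
  have hpos : 0 < (α + q) / 2 - 2 * (α * q) + t * (α * q) := by
    rcases hpq.eq_or_lt with h0 | h0
    · rw [← h0]
      -- with `α * q = 0`, the hypothesis `J < 1` reads `0 < α + q`
      nlinarith
    · have := mul_pos ht h0
      linarith
  nlinarith [mul_pos ht hpos]

/-- Any fraction `t < min 1 ε` of the way to the corner stays in the square and moves each
coordinate by at most `t`. -/
lemma exists_step_toward_corner {α β ε : ℝ} (hα : α ∈ Set.Icc (0 : ℝ) 1)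
    (hβ : β ∈ Set.Icc (0 : ℝ) 1) (hαβ : α ≤ β) (h : α * (1 - β) + β * (1 - α) < 1) (hε : 0 < ε) :
    ∃ α' β' : ℝ, α' ∈ Set.Icc (0 : ℝ) 1 ∧ β' ∈ Set.Icc (0 : ℝ) 1 ∧
      |α' - α| < ε ∧ |β' - β| < ε ∧
      α * (1 - β) + β * (1 - α) < α' * (1 - β') + β' * (1 - α') := by
  obtain ⟨hα0, hα1⟩ := hα
  obtain ⟨hβ0, hβ1⟩ := hβ
  obtain ⟨t, ht, ht'⟩ : ∃ t : ℝ, 0 < t ∧ t < min 1 ε := exists_between (by positivity)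
  obtain ⟨ht1, htε⟩ := lt_min_iff.mp ht'
  refine ⟨α - t * α, β + t * (1 - β), ⟨?_, ?_⟩, ⟨?_, ?_⟩, ?_, ?_,
    xor_reward_lt_toward_corner hα0 hβ1 hαβ h ht⟩
  · nlinarith
  · nlinarith
  · nlinarith
  · nlinarith
  · rw [abs_lt]; constructor <;> nlinarith
  · rw [abs_lt]; constructor <;> nlinarith

/-- The expected reward `J(α,β) = α(1−β) + β(1−α)` of an independent product policy
in the XOR game has no suboptimal local maxima on `[0,1]²`: at any `(α,β)` with
`J(α,β) < 1` and for any `ε > 0` there is a point of `[0,1]²` within distance `ε`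
with strictly larger value. -/
theorem xor_product_policy_no_suboptimal_local_maxima
    (α β : ℝ) (hα : α ∈ Set.Icc (0 : ℝ) 1) (hβ : β ∈ Set.Icc (0 : ℝ) 1)
    (h : α * (1 - β) + β * (1 - α) < 1) :
    ∀ ε : ℝ, 0 < ε →
      ∃ α' β' : ℝ, α' ∈ Set.Icc (0 : ℝ) 1 ∧ β' ∈ Set.Icc (0 : ℝ) 1 ∧
        ‖((α', β') : ℝ × ℝ) - ((α, β) : ℝ × ℝ)‖ < ε ∧
        α * (1 - β) + β * (1 - α) < α' * (1 - β') + β' * (1 - α') := by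
  intro ε hε
  rcases le_total α β with hle | hle
  · obtain ⟨α', β', h1, h2, h3, h4, h5⟩ := exists_step_toward_corner hα hβ hle h hε
    exact ⟨α', β', h1, h2, by simpa [Prod.norm_def] using ⟨h3, h4⟩, h5⟩
  · obtain ⟨β', α', h1, h2, h3, h4, h5⟩ :=
      exists_step_toward_corner hβ hα hle (by linarith) hε
    exact ⟨α', β', h2, h1, by simpa [Prod.norm_def] using ⟨h4, h3⟩, by linarith⟩
end

section
/- In the n-player permutation game, every optimal independent policy is deterministic and has Shannon entropy 0: if μ = μ₁ ⊗ ⋯ ⊗ μₙ is a product probability distribution on ({1,…,n})ⁿ that assigns probability 1 to the set of permutation tuples, then each μᵢ is a Dirac measure, μ is the Dirac measure at a single permutation tuple, and the Shannon entropy of μ equals 0. -/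
/-!
Since the total mass of the product is `1`, optimality forces every tuple of positive probability
to be a permutation tuple. Pick `b i` in the support of `μ i` for each `i`; then `b` is injective,
hence surjective. If the support of some `μ i` contained a further point `y ≠ b i`, then `y = b j`
for some `j ≠ i`, and the tuple obtained from `b` by changing its `i`-th entry to `y` would have
positive probability and a repeated entry. So the support of `μ i` is `{b i}`; Dirac weights and
zero entropy follow.
-/

open scoped Classical

/-- Optimality of a product policy puts its whole support inside the permutation tuples. -/
lemma injective_of_forall_pos {n : ℕ} {μ : Fin n → Fin n → ℝ}
    (hpos : ∀ i x, 0 ≤ μ i x) (hsum : ∀ i, ∑ x : Fin n, μ i x = 1)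
    (hopt : (∑ a : Fin n → Fin n,
        if Function.Injective a then (∏ i : Fin n, μ i (a i)) else 0) = 1)
    {a : Fin n → Fin n} (ha : ∀ i, 0 < μ i (a i)) : Function.Injective a := by
  have htotal : ∑ a : Fin n → Fin n, ∏ i, μ i (a i) = 1 := by
    rw [← Fintype.prod_sum]
    simp [hsum]
  by_contra hinj
  have hlt : (∑ a : Fin n → Fin n, if Function.Injective a then ∏ i, μ i (a i) else 0)
      < ∑ a : Fin n → Fin n, ∏ i, μ i (a i) := by
    refine Finset.sum_lt_sum (fun c _ => ?_) ⟨a, Finset.mem_univ a, ?_⟩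
    · split_ifs
      · exact le_rfl
      · exact Finset.prod_nonneg fun i _ => hpos i (c i)
    · rw [if_neg hinj]
      exact Finset.prod_pos fun i _ => ha i
  linarith

/-- In the `n`-player permutation game, every optimal independent (product) policy
is deterministic with Shannon entropy `0`: if the product distribution
`a ↦ ∏ i, μ i (a i)` assigns probability `1` to the set of permutation tuples,
then each `μ i` is a Dirac measure, the product is the Dirac measure at a single
permutation tuple, and its Shannon entropy equals `0`. -/
theorem permutation_game_optimal_product_policy_deterministic
    (n : ℕ) (μ : Fin n → Fin n → ℝ)
    (hpos : ∀ i x, 0 ≤ μ i x) (hsum : ∀ i, ∑ x : Fin n, μ i x = 1)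
    (hopt : (∑ a : Fin n → Fin n,
        if Function.Injective a then (∏ i : Fin n, μ i (a i)) else 0) = 1) :
    (∀ i, ∃ x : Fin n, ∀ y : Fin n, μ i y = if y = x then 1 else 0) ∧
    (∃ b : Fin n → Fin n, Function.Injective b ∧
        ∀ a : Fin n → Fin n,
          (∏ i : Fin n, μ i (a i)) = if a = b then 1 else 0) ∧
    (-∑ a : Fin n → Fin n,
        (∏ i : Fin n, μ i (a i)) * Real.log (∏ i : Fin n, μ i (a i))) = 0 := by
  have hsupp : ∀ i, ∃ x, 0 < μ i x := by
    intro i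
    obtain ⟨x, -, hx⟩ := Finset.exists_lt_of_sum_lt (s := Finset.univ)
      (f := fun _ : Fin n => (0 : ℝ)) (g := μ i) (by simp [hsum i])
    exact ⟨x, hx⟩
  choose b hb using hsupp
  have hbinj : Function.Injective b := injective_of_forall_pos hpos hsum hopt hb
  have hzero : ∀ i y, y ≠ b i → μ i y = 0 := by
    intro i y hy
    by_contra hne
    have hinj : Function.Injective (Function.update b i y) := by
      refine injective_of_forall_pos hpos hsum hopt fun k => ?_
      rcases eq_or_ne k i with rfl | hk
      · simpa using lt_of_le_of_ne (hpos k y) (Ne.symm hne)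
      · simpa [hk] using hb k
    obtain ⟨j, rfl⟩ := Finite.surjective_of_injective hbinj y
    have hji : j ≠ i := fun h => hy (h ▸ rfl)
    -- Entries `i` and `j` of the updated tuple are both `b j`.
    exact hji (hinj (by simp [hji]))
  have hdirac : ∀ i y, μ i y = if y = b i then 1 else 0 := by
    intro i y
    split_ifs with h
    · rw [h, ← hsum i]
      exact (Fintype.sum_eq_single (b i) (hzero i)).symm
    · exact hzero i y h
  have hprod : ∀ a : Fin n → Fin n, (∏ i, μ i (a i)) = if a = b then 1 else 0 := by
    intro a
    simp [hdirac, Finset.prod_ite_zero, funext_iff]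
  refine ⟨fun i => ⟨b i, hdirac i⟩, ⟨b, hbinj, hprod⟩, ?_⟩
  simp [hprod]
end

section
/- In the n-player permutation game with n ≥ 2, the maximal-entropy gap between policy classes holds: every product distribution on ({1,…,n})ⁿ assigning probability 1 to permutation tuples has Shannon entropy 0, while there exists a joint distribution assigning probability 1 to permutation tuples (the uniform distribution over permutation tuples) with Shannon entropy log(n!) > 0. -/
/-!
If `μ₁ ⊗ ⋯ ⊗ μₙ` is carried by the injective tuples, then it is a point mass. Indeed, let `a` and `b`
both have positive weight and suppose `a i ≠ b i`. An injective tuple of `n` actions out of `n` is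
surjective, so some agent `j ≠ i` has `a j = b i`; replacing the `i`-th coordinate of `a` by `b i`
gives a tuple of positive weight with a repeated action (`eq_of_prod_ne_zero`). Hence every weight is
`0` or `1` and the entropy vanishes. For the second half, the uniform distribution lives on `n!`
tuples (`sum_ite_injective`), so its entropy is `log (n!)`, positive since `n! ≥ 2`.
-/

open scoped Classical

/-- The exchange step: a product weight vanishing off the injective tuples has at most one tuple in
its support. -/
lemma eq_of_prod_ne_zero {n : ℕ} {μ : Fin n → Fin n → ℝ}
    (h : ∀ a : Fin n → Fin n, ¬ Function.Injective a → ∏ i, μ i (a i) = 0)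
    {a b : Fin n → Fin n} (ha : ∏ i, μ i (a i) ≠ 0) (hb : ∏ i, μ i (b i) ≠ 0) : b = a := by
  by_contra hne
  obtain ⟨i, hi⟩ := Function.ne_iff.mp hne
  have hinj : Function.Injective a := by
    by_contra hc
    exact ha (h a hc)
  obtain ⟨j, hj⟩ := Finite.surjective_of_injective hinj (b i)
  have hji : j ≠ i := by
    rintro rfl
    exact hi hj.symm
  have hc : ¬ Function.Injective (Function.update a i (b i)) := fun hc =>
    hji (hc (by simp [hji, hj]))
  obtain ⟨k, -, hk⟩ := Finset.prod_eq_zero_iff.mp (h _ hc)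
  by_cases hki : k = i
  · subst hki
    rw [Function.update_self] at hk
    exact hb (Finset.prod_eq_zero (Finset.mem_univ k) hk)
  · rw [Function.update_of_ne hki] at hk
    exact ha (Finset.prod_eq_zero (Finset.mem_univ k) hk)

lemma sum_ite_injective (n : ℕ) (c : ℝ) :
    (∑ a : Fin n → Fin n, if Function.Injective a then c else 0) = (n.factorial : ℝ) * c := by
  rw [← Finset.sum_filter, Finset.sum_const, nsmul_eq_mul, ← Fintype.card_subtype,
    Fintype.card_congr (Equiv.subtypeInjectiveEquivEmbedding (Fin n) (Fin n)),
    Fintype.card_embedding_eq, Fintype.card_fin, Nat.descFactorial_self]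

/-- In the `n`-player permutation game with `n ≥ 2`, every product distribution
assigning probability `1` to the permutation tuples has Shannon entropy `0`,
while there exists a joint distribution assigning probability `1` to the
permutation tuples (the uniform one) with Shannon entropy `log (n!) > 0`. -/
theorem permutation_game_entropy_gap (n : ℕ) (hn : 2 ≤ n) :
    (∀ μ : Fin n → Fin n → ℝ,
        (∀ i x, 0 ≤ μ i x) → (∀ i, ∑ x : Fin n, μ i x = 1) →
        (∑ a : Fin n → Fin n,
            if Function.Injective a then (∏ i : Fin n, μ i (a i)) else 0) = 1 →
        (-∑ a : Fin n → Fin n,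
            (∏ i : Fin n, μ i (a i)) *
              Real.log (∏ i : Fin n, μ i (a i))) = 0) ∧
    (∃ μ : (Fin n → Fin n) → ℝ,
        (∀ a, 0 ≤ μ a) ∧ (∑ a : Fin n → Fin n, μ a = 1) ∧
        (∑ a : Fin n → Fin n, if Function.Injective a then μ a else 0) = 1 ∧
        (-∑ a : Fin n → Fin n, μ a * Real.log (μ a)) =
          Real.log (n.factorial : ℝ) ∧
        0 < Real.log (n.factorial : ℝ)) := by
  constructor
  · intro μ hμ hsum hperm
    have hnonneg : ∀ a : Fin n → Fin n, 0 ≤ ∏ i, μ i (a i) := fun a =>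
      Finset.prod_nonneg fun i _ => hμ i (a i)
    have htotal : ∑ a : Fin n → Fin n, ∏ i, μ i (a i) = 1 := by
      rw [← Fintype.prod_sum]
      simp [hsum]
    have hoff : ∀ a : Fin n → Fin n, ¬ Function.Injective a → ∏ i, μ i (a i) = 0 := by
      intro a ha
      -- The restricted sum and the full sum agree and compare termwise, so all their terms agree.
      have hterm := (Finset.sum_eq_sum_iff_of_le
        (f := fun a : Fin n → Fin n => if Function.Injective a then ∏ i, μ i (a i) else 0)
        (g := fun a => ∏ i, μ i (a i)) (s := Finset.univ)
        (fun a _ => by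
          by_cases ha : Function.Injective a
          · simp [ha]
          · simpa [ha] using hnonneg a)).mp (hperm.trans htotal.symm) a (Finset.mem_univ a)
      simpa [ha] using hterm.symm
    rw [neg_eq_zero]
    refine Finset.sum_eq_zero fun a _ => ?_
    by_cases ha : ∏ i, μ i (a i) = 0
    · simp [ha]
    · have hone : ∏ i, μ i (a i) = 1 := by
        rw [← htotal]
        symm
        refine Finset.sum_eq_single a (fun b _ hba => ?_) fun h => absurd (Finset.mem_univ a) h
        by_contra hb
        exact hba (eq_of_prod_ne_zero hoff ha hb)
      simp [hone]
  · have hfac : (n.factorial : ℝ) ≠ 0 := by exact_mod_cast n.factorial_ne_zero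
    refine ⟨fun a => if Function.Injective a then (n.factorial : ℝ)⁻¹ else 0, ?_, ?_, ?_, ?_, ?_⟩
    · intro a
      by_cases ha : Function.Injective a <;> simp [ha]
    · rw [sum_ite_injective, mul_inv_cancel₀ hfac]
    · calc _ = ∑ a : Fin n → Fin n,
              if Function.Injective a then (n.factorial : ℝ)⁻¹ else 0 :=
            Finset.sum_congr rfl fun a _ => by
              by_cases ha : Function.Injective a <;> simp [ha]
        _ = 1 := by rw [sum_ite_injective, mul_inv_cancel₀ hfac]
    · calc _ = -∑ a : Fin n → Fin n, if Function.Injective a then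
              (n.factorial : ℝ)⁻¹ * Real.log (n.factorial : ℝ)⁻¹ else 0 :=
            congrArg Neg.neg (Finset.sum_congr rfl fun a _ => by
              by_cases ha : Function.Injective a <;> simp [ha])
        _ = Real.log (n.factorial : ℝ) := by
            rw [sum_ite_injective, mul_inv_cancel_left₀ hfac, Real.log_inv, neg_neg]
    · apply Real.log_pos
      exact_mod_cast lt_of_lt_of_le hn n.self_le_factorial
end

section
/- In the XOR game, for any functions Q₁, Q₂ : {0,1} → ℝ satisfying the IGM principle with respect to a global function Q_tot : {0,1}² → ℝ, if Q₁(0) > Q₁(1), then every joint maximizer (a¹*, a²*) of Q_tot has a¹* = 0; consequently, if additionally Q_tot agrees with the XOR payoff at (1,0), i.e., Q_tot(1,0) = 1 is maximal, a contradiction follows, so Q_tot cannot equal the XOR payoff. -/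
/-- In the XOR game, for `Q₁ Q₂ : Fin 2 → ℝ` satisfying the IGM principle with
respect to `Qtot : Fin 2 × Fin 2 → ℝ`, if `Q₁ 0 > Q₁ 1` then every joint
maximizer of `Qtot` has first coordinate `0`; consequently `Qtot` cannot equal
the XOR payoff (under which `(1,0)` is a maximizer with value `1`). -/
theorem xor_igm_first_coordinate_forced (Q₁ Q₂ : Fin 2 → ℝ)
    (Qtot : Fin 2 × Fin 2 → ℝ)
    (higm : {p : Fin 2 × Fin 2 | ∀ q : Fin 2 × Fin 2, Qtot q ≤ Qtot p} =
      {a : Fin 2 | ∀ a' : Fin 2, Q₁ a' ≤ Q₁ a} ×ˢ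
        {b : Fin 2 | ∀ b' : Fin 2, Q₂ b' ≤ Q₂ b})
    (h1 : Q₁ 1 < Q₁ 0) :
    (∀ p : Fin 2 × Fin 2, (∀ q : Fin 2 × Fin 2, Qtot q ≤ Qtot p) → p.1 = 0) ∧
    Qtot ≠ fun p : Fin 2 × Fin 2 => if p.1 ≠ p.2 then (1 : ℝ) else 0 := by
  have key : ∀ p : Fin 2 × Fin 2, (∀ q : Fin 2 × Fin 2, Qtot q ≤ Qtot p) → p.1 = 0 := by
    intro p hp
    have hmem : p ∈ {a : Fin 2 | ∀ a' : Fin 2, Q₁ a' ≤ Q₁ a} ×ˢ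
        {b : Fin 2 | ∀ b' : Fin 2, Q₂ b' ≤ Q₂ b} := higm ▸ hp
    by_contra hne
    have hp1 : p.1 = 1 := by omega
    have h0 : Q₁ 0 ≤ Q₁ p.1 := hmem.1 0
    rw [hp1] at h0
    exact absurd h1 (not_lt.mpr h0)
  refine ⟨key, fun hQ => ?_⟩
  -- `(1, 0)` attains the maximal XOR payoff, yet its first coordinate is not `0`.
  have h10 : ((1, 0) : Fin 2 × Fin 2).1 = 0 := by
    apply key
    intro q
    rw [hQ]
    have h : (if ((1, 0) : Fin 2 × Fin 2).1 ≠ ((1, 0) : Fin 2 × Fin 2).2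
        then (1 : ℝ) else 0) = 1 := if_pos (by decide)
    refine le_of_le_of_eq ?_ h.symm
    dsimp only
    split_ifs
    · exact le_rfl
    · exact zero_le_one
  exact absurd h10 (by decide)
end

section
/- In the XOR game, if Q₁, Q₂ : {0,1} → ℝ satisfy Q₁(0) = Q₁(1) and Q₂(0) = Q₂(1), then any global function Q_tot : {0,1}² → ℝ satisfying the IGM principle with respect to Q₁ and Q₂ has all four joint actions as maximizers, hence Q_tot(0,0) = Q_tot(0,1) = Q_tot(1,0) = Q_tot(1,1); in particular Q_tot cannot equal the XOR payoff. -/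
/-- In the XOR game, if `Q₁ 0 = Q₁ 1` and `Q₂ 0 = Q₂ 1`, then any
`Qtot : Fin 2 × Fin 2 → ℝ` satisfying the IGM principle with respect to `Q₁`
and `Q₂` has all four joint actions as maximizers, hence
`Qtot (0,0) = Qtot (0,1) = Qtot (1,0) = Qtot (1,1)`; in particular `Qtot`
cannot equal the XOR payoff. -/
theorem xor_igm_equal_locals_forces_constant (Q₁ Q₂ : Fin 2 → ℝ)
    (Qtot : Fin 2 × Fin 2 → ℝ)
    (h1 : Q₁ 0 = Q₁ 1) (h2 : Q₂ 0 = Q₂ 1)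
    (higm : {p : Fin 2 × Fin 2 | ∀ q : Fin 2 × Fin 2, Qtot q ≤ Qtot p} =
      {a : Fin 2 | ∀ a' : Fin 2, Q₁ a' ≤ Q₁ a} ×ˢ
        {b : Fin 2 | ∀ b' : Fin 2, Q₂ b' ≤ Q₂ b}) :
    (∀ p q : Fin 2 × Fin 2, Qtot q ≤ Qtot p) ∧
    Qtot (0, 0) = Qtot (0, 1) ∧ Qtot (0, 1) = Qtot (1, 0) ∧
    Qtot (1, 0) = Qtot (1, 1) ∧
    Qtot ≠ fun p : Fin 2 × Fin 2 => if p.1 ≠ p.2 then (1 : ℝ) else 0 := by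
  have e1 : ∀ a a' : Fin 2, Q₁ a' ≤ Q₁ a := by
    simp [Fin.forall_fin_two, h1]
  have e2 : ∀ b b' : Fin 2, Q₂ b' ≤ Q₂ b := by
    simp [Fin.forall_fin_two, h2]
  -- Every local action is a maximizer, so by IGM every joint action is one too.
  have key : ∀ p q : Fin 2 × Fin 2, Qtot q ≤ Qtot p := fun p => by
    have hp : p ∈ {a : Fin 2 | ∀ a' : Fin 2, Q₁ a' ≤ Q₁ a} ×ˢ
        {b : Fin 2 | ∀ b' : Fin 2, Q₂ b' ≤ Q₂ b} := ⟨e1 p.1, e2 p.2⟩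
    rw [← higm] at hp
    exact hp
  have heq : ∀ p q, Qtot p = Qtot q := fun p q => le_antisymm (key q p) (key p q)
  refine ⟨key, heq _ _, heq _ _, heq _ _, fun h => ?_⟩
  -- The XOR payoff takes the value 0 at (0, 0) and 1 at (0, 1).
  have h01 := heq (0, 0) (0, 1)
  simp [h] at h01
end
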